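/- Assume the finite-state Euler–Maruyama setting with additive noise (σ(x,i) = σ(i)), the global Lipschitz condition with constant L, condition (H) with parameters c_0 and (β_i), and the averaging condition Σ_i μ_i β_i < 0. Fix p ∈ (0,1) with η_p > 0, fix a strictly positive eigenvector ξ^{(p)} of Q_p with eigenvalue −η_p, and define α as in Theorem 3.1 (α := p·[β_0 + 4L²(3+4β_0) + 4^{(2+p)/2} β_0 (4^{p/2} L^p + q_0 ξ̂_0 ξ̄_0)], with ξ̂_0 = max_i ξ^{(p)}_i, ξ̄_0 = (min_i ξ^{(p)}_i)^{−1}, β_0 = max_i|β_i|, q_0 = max_i(−q_ii)). Then for every δ ∈ (0,1) with δ < (1/(16L²)) ∧ (η_p/α)^{2/p} and every initial point (x,i) ∈ ℝⁿ × S, the p-th moments of the k-step distributions are uniformly bounded: sup_{k ≥ 0} ∫_{ℝⁿ×S} |y|^p d(K_δ^{(k)} δ_{(x,i)})(y,j) < ∞, where K_δ^{(k)} δ_{(x,i)} denotes the distribution after k steps of the kernel K_δ started from the Dirac mass at (x,i). -/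

import Mathlib

open MeasureTheory ProbabilityTheory

/-- `Q` has nonnegative off-diagonal entries and every row sums to zero
(a conservative Q-matrix). -/
def IsConservativeQMatrix {N : ℕ} (Q : Matrix (Fin N) (Fin N) ℝ) : Prop :=
  (∀ i j, i ≠ j → 0 ≤ Q i j) ∧ ∀ i, ∑ j, Q i j = 0

/-- Irreducibility: any two distinct states are connected by a finite chain of
transitions with strictly positive rates. -/
def MatrixIrreducible {N : ℕ} (Q : Matrix (Fin N) (Fin N) ℝ) : Prop :=
  ∀ i j : Fin N, i ≠ j → ∃ (k : ℕ) (c : ℕ → Fin N),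
    c 0 = i ∧ c k = j ∧ ∀ l < k, 0 < Q (c l) (c (l + 1))

/-- The set of real parts of the (complex) eigenvalues of a real matrix. -/
def spectrumRe {N : ℕ} (M : Matrix (Fin N) (Fin N) ℝ) : Set ℝ :=
  {x : ℝ | ∃ γ ∈ spectrum ℂ (M.map Complex.ofReal), γ.re = x}

/-- The matrix exponential `exp M = ∑ₖ Mᵏ/k!`. -/
noncomputable def matExp {N : ℕ} (M : Matrix (Fin N) (Fin N) ℝ) :
    Matrix (Fin N) (Fin N) ℝ :=
  ∑' k : ℕ, ((k.factorial : ℝ)⁻¹) • M ^ k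

/-- Standard Gaussian measure on `ℝ^m`. -/
noncomputable def stdGaussianPi (m : ℕ) : Measure (Fin m → ℝ) :=
  Measure.pi fun _ => gaussianReal 0 1

/-- The distribution on `Fin N` with weights given by row `i` of `P`. -/
noncomputable def rowMeasure {N : ℕ} (P : Matrix (Fin N) (Fin N) ℝ) (i : Fin N) :
    Measure (Fin N) :=
  ∑ j : Fin N, ENNReal.ofReal (P i j) • Measure.dirac j

/-- Hilbert–Schmidt norm of a real matrix. -/
noncomputable def hsNorm {n m : ℕ} (M : Matrix (Fin n) (Fin m) ℝ) : ℝ :=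
  Real.sqrt (∑ i, ∑ j, (M i j) ^ 2)

/-- One step of the Euler–Maruyama scheme as a transition kernel on `ℝⁿ × S`:
starting from `(x, i)`, the next state is
`(x + δ b(x,i) + √δ σ(x,i) Z, J)` with `Z` standard Gaussian on `ℝ^m` and
`J` distributed according to row `i` of `exp(δ Q)`, independently. -/
noncomputable def EMKernel {n m N : ℕ} (Q : Matrix (Fin N) (Fin N) ℝ)
    (b : EuclideanSpace ℝ (Fin n) → Fin N → EuclideanSpace ℝ (Fin n))
    (σ : EuclideanSpace ℝ (Fin n) → Fin N → Matrix (Fin n) (Fin m) ℝ)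
    (δ : ℝ) (q : EuclideanSpace ℝ (Fin n) × Fin N) :
    Measure (EuclideanSpace ℝ (Fin n) × Fin N) :=
  Measure.map
    (fun zj : (Fin m → ℝ) × Fin N =>
      (q.1 + δ • b q.1 q.2 +
        Real.sqrt δ • ((WithLp.equiv 2 (Fin n → ℝ)).symm ((σ q.1 q.2).mulVec zj.1)),
        zj.2))
    ((stdGaussianPi m).prod (rowMeasure (matExp (δ • Q)) q.2))

/-- `π` is an invariant measure of the kernel `K`. -/
def IsInvariantMeasure {α : Type*} [MeasurableSpace α] (K : α → Measure α)
    (π : Measure α) : Prop :=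
  ∀ A : Set α, MeasurableSet A → ∫⁻ q, K q A ∂π = π A



lemma matExp_eq {N : ℕ} (M : Matrix (Fin N) (Fin N) ℝ) : matExp M = NormedSpace.exp M := by
  rw [matExp, NormedSpace.exp_eq_tsum ℝ]

open scoped Matrix.Norms.Operator in
lemma matExp_hasSum {N : ℕ} (M : Matrix (Fin N) (Fin N) ℝ) :
    HasSum (fun k : ℕ => ((k.factorial : ℝ)⁻¹) • M ^ k) (matExp M) := by
  rw [matExp]
  exact (NormedSpace.expSeries_summable' (𝕂 := ℝ) M).hasSum

lemma matExp_mulVec_hasSum {N : ℕ} (M : Matrix (Fin N) (Fin N) ℝ) (v : Fin N → ℝ) (i : Fin N) :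
    HasSum (fun k : ℕ => ((k.factorial : ℝ)⁻¹) * ((M ^ k).mulVec v i)) ((matExp M).mulVec v i) := by
  have h := (matExp_hasSum M)
  have h2 : ∀ j, HasSum (fun k : ℕ => (((k.factorial : ℝ)⁻¹) • M ^ k) i j * v j) (matExp M i j * v j) := by
    intro j
    have := (Pi.hasSum.1 ((Pi.hasSum.1 h) i)) j
    exact this.mul_right _
  have h3 := hasSum_sum (s := Finset.univ) (fun j _ => h2 j)
  convert h3 using 1
  · ext k
    simp [Matrix.mulVec, dotProduct, Finset.mul_sum, mul_assoc]
  · rfl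

lemma pow_entries_nonneg {N : ℕ} (M : Matrix (Fin N) (Fin N) ℝ) (h : ∀ i j, 0 ≤ M i j) (k : ℕ) :
    ∀ i j, 0 ≤ (M ^ k) i j := by
  induction k with
  | zero => intro i j; simp only [pow_zero, Matrix.one_apply]; split_ifs <;> norm_num
  | succ k ih =>
    intro i j
    rw [pow_succ, Matrix.mul_apply]
    exact Finset.sum_nonneg fun l _ => mul_nonneg (ih i l) (h l j)

lemma matExp_nonneg_of_nonneg {N : ℕ} (M : Matrix (Fin N) (Fin N) ℝ) (h : ∀ i j, 0 ≤ M i j) :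
    ∀ i j, 0 ≤ matExp M i j := by
  intro i j
  have := (Pi.hasSum.1 ((Pi.hasSum.1 (matExp_hasSum M)) i)) j
  refine this.nonneg fun k => ?_
  exact mul_nonneg (by positivity) (pow_entries_nonneg M h k i j)

open scoped Matrix.Norms.Operator in
lemma matExp_nonneg {N : ℕ} (M : Matrix (Fin N) (Fin N) ℝ) (h : ∀ i j, i ≠ j → 0 ≤ M i j) :
    ∀ i j, 0 ≤ matExp M i j := by
  set c : ℝ := ∑ i, |M i i| with hc
  have h1 : matExp M = Real.exp (-c) • matExp (M + c • (1 : Matrix (Fin N) (Fin N) ℝ)) := by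
    have e : M = (M + c • (1 : Matrix (Fin N) (Fin N) ℝ)) + (-c) • (1 : Matrix (Fin N) (Fin N) ℝ) := by
      module
    have hcom : Commute (M + c • (1 : Matrix (Fin N) (Fin N) ℝ)) ((-c) • (1 : Matrix (Fin N) (Fin N) ℝ)) :=
      (Commute.one_right _).smul_right _
    have e2 : NormedSpace.exp ((-c) • (1 : Matrix (Fin N) (Fin N) ℝ)) = Real.exp (-c) • (1 : Matrix (Fin N) (Fin N) ℝ) := by
      rw [← Algebra.algebraMap_eq_smul_one, ← Algebra.algebraMap_eq_smul_one, Real.exp_eq_exp_ℝ]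
      exact (NormedSpace.algebraMap_exp_comm (-c)).symm
    rw [matExp_eq, matExp_eq]
    conv_lhs => rw [e]
    rw [Matrix.exp_add_of_commute _ _ hcom, e2, mul_smul_comm, mul_one]
  intro i j
  rw [h1, Matrix.smul_apply, smul_eq_mul]
  refine mul_nonneg (Real.exp_pos _).le (matExp_nonneg_of_nonneg _ ?_ i j)
  intro i j
  rcases eq_or_ne i j with rfl | hij
  · simp only [Matrix.add_apply, Matrix.smul_apply, Matrix.one_apply_eq, smul_eq_mul, mul_one]
    have : |M i i| ≤ c := Finset.single_le_sum (f := fun i => |M i i|) (fun i _ => abs_nonneg _) (Finset.mem_univ i)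
    linarith [neg_abs_le (M i i)]
  · simp [Matrix.one_apply_ne hij, h i j hij]

lemma matExp_row_sum {N : ℕ} (M : Matrix (Fin N) (Fin N) ℝ) (h : ∀ i, ∑ j, M i j = 0) (i : Fin N) :
    ∑ j, matExp M i j = 1 := by
  have h0 := matExp_mulVec_hasSum M (fun _ => 1) i
  have hz : M.mulVec (fun _ => (1 : ℝ)) = 0 := by
    ext i; simp [Matrix.mulVec, dotProduct, h]
  have h1 := hasSum_single (f := fun k : ℕ => ((k.factorial : ℝ)⁻¹) * ((M ^ k).mulVec (fun _ => (1:ℝ)) i)) 0 (by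
    intro k hk
    obtain ⟨l, rfl⟩ := Nat.exists_eq_succ_of_ne_zero hk
    simp only [Nat.succ_eq_add_one, pow_succ, ← Matrix.mulVec_mulVec, hz]
    simp)
  have := h0.unique h1
  simpa [Matrix.mulVec, dotProduct, Matrix.one_apply] using this

/-- bound for powers -/
lemma pow_mulVec_bound {N : ℕ} (M : Matrix (Fin N) (Fin N) ℝ) (r : ℝ)
    (hM : ∀ (v : Fin N → ℝ) (B : ℝ), (∀ i, |v i| ≤ B) → ∀ i, |M.mulVec v i| ≤ r * B)
    (v : Fin N → ℝ) (B : ℝ) (hv : ∀ i, |v i| ≤ B) (k : ℕ) :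
    ∀ i, |(M ^ k).mulVec v i| ≤ r ^ k * B := by
  induction k with
  | zero => simpa using hv
  | succ k ih =>
    rw [pow_succ', ← Matrix.mulVec_mulVec, pow_succ', mul_assoc]
    exact hM _ _ ih

lemma matExp_taylor {N : ℕ} (M : Matrix (Fin N) (Fin N) ℝ) (r : ℝ) (hr0 : 0 ≤ r) (hr : r ≤ 1/4)
    (hM : ∀ (v : Fin N → ℝ) (B : ℝ), (∀ i, |v i| ≤ B) → ∀ i, |M.mulVec v i| ≤ r * B)
    (v : Fin N → ℝ) (B : ℝ) (hv : ∀ i, |M.mulVec (M.mulVec v) i| ≤ B) (i : Fin N) :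
    |(matExp M).mulVec v i - v i - M.mulVec v i| ≤ 2/3 * B := by
  have h0 := matExp_mulVec_hasSum M v i
  have hB : 0 ≤ B := (abs_nonneg _).trans (hv i)
  rw [← hasSum_nat_add_iff' 2] at h0
  simp only [Finset.sum_range_succ, Finset.sum_range_zero] at h0
  have hg : HasSum (fun k : ℕ => (1/2 * B) * (1/4 : ℝ) ^ k) ((1/2 * B) * (1 - 1/4 : ℝ)⁻¹) :=
    (hasSum_geometric_of_lt_one (by norm_num) (by norm_num)).mul_left _
  have hb : ∀ k : ℕ, ‖(((k+2).factorial : ℝ)⁻¹) * ((M ^ (k+2)).mulVec v i)‖ ≤ (1/2 * B) * (1/4 : ℝ) ^ k := by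
    intro k
    have h1 : |(M ^ (k+2)).mulVec v i| ≤ r ^ k * B := by
      have := pow_mulVec_bound M r hM _ B hv k i
      rwa [Matrix.mulVec_mulVec, Matrix.mulVec_mulVec, mul_assoc, ← pow_two, ← pow_add] at this
    have h2 : r ^ k ≤ (1/4) ^ k := pow_le_pow_left₀ hr0 hr k
    have h3 : (((k+2).factorial : ℝ)⁻¹) ≤ 1/2 := by
      rw [one_div]
      apply inv_anti₀ (by norm_num)
      have : Nat.factorial 2 ≤ (k+2).factorial := Nat.factorial_le (by omega)
      exact_mod_cast this
    rw [Real.norm_eq_abs, abs_mul, abs_of_nonneg (by positivity : (0:ℝ) ≤ ((k+2).factorial : ℝ)⁻¹)]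
    calc _ ≤ 1/2 * ((1/4)^k * B) := by
          apply mul_le_mul h3 (h1.trans (by gcongr)) (abs_nonneg _) (by norm_num)
      _ = _ := by ring
  have := tsum_of_norm_bounded hg hb
  rw [h0.tsum_eq] at this
  simp at this
  rw [sub_sub, ← Real.norm_eq_abs]
  simp
  linarith

/-- A conservative Q-matrix has sup operator norm at most `2 q₀`. -/
lemma Q_bound {N : ℕ} (Q : Matrix (Fin N) (Fin N) ℝ) (hQ : IsConservativeQMatrix Q) (q₀ : ℝ)
    (hq : ∀ i, -Q i i ≤ q₀) (v : Fin N → ℝ) (B : ℝ) (hv : ∀ i, |v i| ≤ B) (i : Fin N) :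
    |Q.mulVec v i| ≤ 2 * q₀ * B := by
  have hB : 0 ≤ B := (abs_nonneg _).trans (hv i)
  have h1 : |Q.mulVec v i| ≤ ∑ j, |Q i j| * B := by
    rw [Matrix.mulVec, dotProduct]
    refine (Finset.abs_sum_le_sum_abs _ _).trans (Finset.sum_le_sum fun j _ => ?_)
    rw [abs_mul]
    exact mul_le_mul_of_nonneg_left (hv j) (abs_nonneg _)
  have h2 : ∑ j, Q i j = 0 := hQ.2 i
  rw [← Finset.add_sum_erase _ _ (Finset.mem_univ i)] at h2
  rw [← Finset.sum_mul, ← Finset.add_sum_erase _ _ (Finset.mem_univ i)] at h1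
  have h3 : ∑ j ∈ Finset.univ.erase i, |Q i j| = ∑ j ∈ Finset.univ.erase i, Q i j := by
    refine Finset.sum_congr rfl fun j hj => abs_of_nonneg (hQ.1 i j ?_)
    exact (Finset.ne_of_mem_erase hj).symm
  have h4 : 0 ≤ ∑ j ∈ Finset.univ.erase i, Q i j := by
    rw [← h3]; exact Finset.sum_nonneg fun _ _ => abs_nonneg _
  have h5 : |Q i i| = -Q i i := abs_of_nonpos (by linarith)
  rw [h3, h5] at h1
  have := hq i
  refine h1.trans (mul_le_mul_of_nonneg_right (by linarith) hB)

set_option maxHeartbeats 1000000 in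
lemma key_contraction {N : ℕ} (Q : Matrix (Fin N) (Fin N) ℝ)
    (hQ : IsConservativeQMatrix Q) (L : ℝ) (hL : 0 < L) (β : Fin N → ℝ)
    (p : ℝ) (hp : 0 < p) (hp1 : p < 1) (ηp : ℝ) (hηpos : 0 < ηp)
    (ξ : Fin N → ℝ) (hξpos : ∀ i, 0 < ξ i)
    (hξeig : (Q + (p / 2) • Matrix.diagonal β).mulVec ξ = (-ηp) • ξ)
    (ξhat ξbar β₀ q₀ α : ℝ)
    (hξhat : IsGreatest (Set.range ξ) ξhat)
    (hξbar : IsLeast (Set.range ξ) ξbar⁻¹)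
    (hβ₀ : IsGreatest (Set.range fun i => |β i|) β₀)
    (hq₀ : IsGreatest (Set.range fun i => -Q i i) q₀)
    (hα : p * (12 * L ^ 2 + 16 * L ^ 2 * β₀ + 4 * β₀ * (q₀ * ξhat * ξbar)) ≤ α)
    (δ : ℝ) (hδ0 : 0 < δ) (hδ1 : δ < 1) (hδL : δ * (16 * L ^ 2) < 1)
    (hδα : δ * α < ηp) (i : Fin N) (hi : 0 ≤ 1 + δ * β i + 2 * δ ^ 2 * L ^ 2) :
    (1 + p / 2 * (δ * β i + 2 * δ ^ 2 * L ^ 2)) * ((matExp (δ • Q)).mulVec ξ i)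
      ≤ (1 - δ * (ηp - δ * α)) * ξ i := by
  have hqi : ∀ i, -Q i i ≤ q₀ := fun i => hq₀.2 ⟨i, rfl⟩
  have hβi : ∀ i, |β i| ≤ β₀ := fun i => hβ₀.2 ⟨i, rfl⟩
  have hξi : ∀ i, ξ i ≤ ξhat := fun i => hξhat.2 ⟨i, rfl⟩
  have hξm : ∀ i, ξbar⁻¹ ≤ ξ i := fun i => hξbar.2 ⟨i, rfl⟩
  have hmin : 0 < ξbar⁻¹ := by
    obtain ⟨k, hk⟩ := hξbar.1
    rw [← hk]; exact hξpos k
  have hbar : 0 < ξbar := inv_pos.1 hmin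
  have hhat : 0 < ξhat := (hξpos i).trans_le (hξi i)
  -- eigen equation
  have eig : ∀ k, Q.mulVec ξ k = -(ηp + p / 2 * β k) * ξ k := by
    intro k
    have := congrFun hξeig k
    rw [Matrix.add_mulVec, Matrix.smul_mulVec] at this
    simp [Matrix.mulVec_diagonal] at this
    linarith
  have hexp : ∀ k, Q.mulVec ξ k = ∑ j ∈ Finset.univ.erase k, Q k j * ξ j + Q k k * ξ k := by
    intro k
    rw [Matrix.mulVec, dotProduct, ← Finset.add_sum_erase _ _ (Finset.mem_univ k), add_comm]
  -- upper bound of `p/2 β`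
  have hup : ∀ k, ηp + p / 2 * β k ≤ q₀ := by
    intro k
    have h1 : 0 ≤ ∑ j ∈ Finset.univ.erase k, Q k j * ξ j :=
      Finset.sum_nonneg fun j hj => mul_nonneg (hQ.1 k j (Finset.ne_of_mem_erase hj).symm) (hξpos j).le
    have h2 := hexp k
    rw [eig k] at h2
    have h3 : (ηp + p / 2 * β k) * ξ k ≤ q₀ * ξ k := by
      have := mul_le_mul_of_nonneg_right (hqi k) (hξpos k).le
      linarith
    exact le_of_mul_le_mul_right h3 (hξpos k)
  -- `η ≤ p/2 β₀`
  have hηβ : ηp ≤ p / 2 * β₀ := by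
    obtain ⟨k, hk⟩ := hξbar.1
    have h0 : 0 ≤ Q.mulVec ξ k := by
      have : Q.mulVec ξ k = ∑ j, Q k j * (ξ j - ξ k) := by
        simp only [mul_sub, Finset.sum_sub_distrib, ← Finset.sum_mul, hQ.2 k]
        simp [Matrix.mulVec, dotProduct]
      rw [this]
      refine Finset.sum_nonneg fun j _ => ?_
      rcases eq_or_ne k j with rfl | h
      · simp
      · exact mul_nonneg (hQ.1 k j h) (by rw [hk]; linarith [hξm j])
    rw [eig k] at h0
    have h1 : ηp + p / 2 * β k ≤ 0 := by
      by_contra hcon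
      push Not at hcon
      have := mul_pos hcon (hξpos k)
      linarith
    have h2 := neg_abs_le (β k)
    have h3 := hβi k
    nlinarith
  have hβ0 : 0 < β₀ := by
    by_contra hcon
    push Not at hcon
    nlinarith
  have hq0 : 0 ≤ q₀ := by
    have h1 := hQ.2 i
    rw [← Finset.add_sum_erase _ _ (Finset.mem_univ i)] at h1
    have h2 : 0 ≤ ∑ j ∈ Finset.univ.erase i, Q i j :=
      Finset.sum_nonneg fun j hj => hQ.1 i j (Finset.ne_of_mem_erase hj).symm
    linarith [hqi i]
  set T : ℝ := q₀ * ξhat * ξbar with hT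
  have hbx : ∀ k, 1 ≤ ξbar * ξ k := by
    intro k
    have := mul_le_mul_of_nonneg_left (hξm k) hbar.le
    rwa [mul_inv_cancel₀ hbar.ne'] at this
  have hTi : q₀ * ξhat ≤ T * ξ i := by
    have := mul_le_mul_of_nonneg_left (hbx i) (mul_nonneg hq0 hhat.le)
    rw [hT]; linarith
  have hTq : q₀ ≤ T := by
    have h1 : 1 ≤ ξbar * ξhat := (hbx i).trans (mul_le_mul_of_nonneg_left (hξi i) hbar.le)
    have := mul_le_mul_of_nonneg_left h1 hq0
    rw [hT]; linarith
  have hδq : δ * q₀ ≤ 1 / 8 := by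
    have h1 : p * (4 * β₀ * T) ≤ α := by
      refine le_trans ?_ hα
      apply mul_le_mul_of_nonneg_left _ hp.le
      have : 0 ≤ 12 * L ^ 2 + 16 * L ^ 2 * β₀ := by positivity
      linarith
    have h2 : δ * (p * (4 * β₀ * q₀)) ≤ δ * α := by
      apply mul_le_mul_of_nonneg_left _ hδ0.le
      refine le_trans ?_ h1
      gcongr
    have h3 : (p * β₀) * (δ * q₀) ≤ (p * β₀) * (1 / 8) := by linarith
    exact le_of_mul_le_mul_left h3 (mul_pos hp hβ0)
  -- Taylor estimate
  have hQξ : ∀ k, |Q.mulVec ξ k| ≤ p * β₀ * ξ k := by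
    intro k
    rw [eig k, abs_mul, abs_of_pos (hξpos k)]
    apply mul_le_mul_of_nonneg_right _ (hξpos k).le
    rw [abs_neg]
    have h1 := abs_le.1 (hβi k)
    rw [abs_le]
    constructor <;> nlinarith
  have hQQξ : ∀ k, |Q.mulVec (Q.mulVec ξ) k| ≤ 2 * q₀ * (p * β₀ * ξhat) := by
    apply Q_bound Q hQ q₀ hqi
    intro k
    exact (hQξ k).trans (mul_le_mul_of_nonneg_left (hξi k) (by positivity))
  have htay := matExp_taylor (δ • Q) (2 * (δ * q₀)) (by positivity) (by linarith)
    (by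
      intro v B hv k
      rw [Matrix.smul_mulVec, Pi.smul_apply, smul_eq_mul, abs_mul, abs_of_pos hδ0]
      have := mul_le_mul_of_nonneg_left (Q_bound Q hQ q₀ hqi v B hv k) hδ0.le
      linarith) ξ (δ ^ 2 * (2 * q₀ * (p * β₀ * ξhat)))
    (by
      intro k
      rw [Matrix.smul_mulVec, Matrix.smul_mulVec, Matrix.mulVec_smul, Pi.smul_apply, Pi.smul_apply,
        smul_eq_mul, smul_eq_mul, abs_mul, abs_mul, abs_of_pos hδ0]
      have := mul_le_mul_of_nonneg_left (hQQξ k) (by positivity : 0 ≤ δ ^ 2)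
      linarith) i
  rw [Matrix.smul_mulVec, Pi.smul_apply, smul_eq_mul] at htay
  set P := (matExp (δ • Q)).mulVec ξ i with hP
  set A := Q.mulVec ξ i with hA
  have heA : A = -(ηp + p / 2 * β i) * ξ i := eig i
  have hA1 : |A| ≤ p * β₀ * ξ i := hQξ i
  have hA2 : |A| ≤ 2 * q₀ * ξhat :=
    Q_bound Q hQ q₀ hqi ξ ξhat (fun k => by rw [abs_of_pos (hξpos k)]; exact hξi k) i
  obtain ⟨R, hR⟩ : ∃ R, R = P - ξ i - δ * A := ⟨_, rfl⟩
  rw [← hR] at htay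
  have hPR : P = ξ i + δ * A + R := by linarith
  set u := p / 2 * (δ * β i + 2 * δ ^ 2 * L ^ 2) with hu
  have hδL2 : δ ^ 2 * L ^ 2 ≤ 1 / 16 := by nlinarith [sq_nonneg L]
  have hu1 : |1 + u| ≤ 5 / 4 := by
    have h1 := mul_le_mul_of_nonneg_left (hup i) hδ0.le
    have h2 : p * (δ ^ 2 * L ^ 2) ≤ 1 * (1 / 16) := by
      apply mul_le_mul hp1.le hδL2 (by positivity) (by norm_num)
    have h3 : 0 ≤ δ * ηp := by positivity
    have h4 : p / 2 * (-1) ≤ p / 2 * (δ * β i + 2 * δ ^ 2 * L ^ 2) :=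
      mul_le_mul_of_nonneg_left (by linarith) (by linarith)
    rw [abs_le]
    constructor
    · linarith
    · rw [hu]; linarith
  have hR2 : (1 + u) * R ≤ 5 / 4 * (2 / 3 * (δ ^ 2 * (2 * q₀ * (p * β₀ * ξhat)))) := by
    refine (le_abs_self _).trans ?_
    rw [abs_mul]
    exact mul_le_mul hu1 htay (abs_nonneg _) (by norm_num)
  have e1 : (p / 2 * β i) * A ≤ p / 2 * β₀ * (2 * q₀ * ξhat) := by
    refine (le_abs_self _).trans ?_
    rw [abs_mul, abs_mul, abs_of_pos (by positivity : 0 < p / 2)]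
    have := hβi i
    gcongr
  have e2 : δ * A ≤ β₀ * ξ i := by
    have h1 : A ≤ β₀ * ξ i := by
      refine (le_abs_self _).trans (hA1.trans ?_)
      apply mul_le_mul_of_nonneg_right _ (hξpos i).le
      nlinarith
    have h2 : 0 < β₀ * ξ i := mul_pos hβ0 (hξpos i)
    nlinarith
  have e3 : (p * L ^ 2) * (δ * A) ≤ (p * L ^ 2) * (β₀ * ξ i) :=
    mul_le_mul_of_nonneg_left e2 (by positivity)
  have e4 : p * β₀ * (q₀ * ξhat) ≤ p * β₀ * (T * ξ i) :=
    mul_le_mul_of_nonneg_left hTi (by positivity)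
  have e5 := mul_le_mul_of_nonneg_right hα (hξpos i).le
  have hTn : 0 ≤ T := hq0.trans hTq
  have hmain : p * L ^ 2 * ξ i + (p / 2 * β i) * A + (p * L ^ 2) * (δ * A)
      + 5 / 4 * (2 / 3 * (2 * q₀ * (p * β₀ * ξhat))) ≤ α * ξ i := by
    have n1 : 0 ≤ p * L ^ 2 * ξ i := by have := hξpos i; positivity
    have n2 : 0 ≤ p * L ^ 2 * (β₀ * ξ i) := by have := hξpos i; positivity
    have n3 : 0 ≤ p * β₀ * (T * ξ i) := by have := hξpos i; positivity
    linarith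
  have hmain2 := mul_le_mul_of_nonneg_left hmain (by positivity : 0 ≤ δ ^ 2)
  have hfin : (1 + u) * P = ξ i - δ * ηp * ξ i + δ ^ 2 * (p * L ^ 2 * ξ i + (p / 2 * β i) * A
      + (p * L ^ 2) * (δ * A)) + (1 + u) * R := by
    have : δ * A = -(δ * ηp * ξ i) - δ * (p / 2 * β i) * ξ i := by rw [heA]; ring
    rw [hPR, hu]
    linear_combination this
  rw [hfin]
  linarith

lemma drift_bound {n : ℕ} (b : EuclideanSpace ℝ (Fin n) → EuclideanSpace ℝ (Fin n))
    (L : ℝ) (hL : 0 < L) (hLip : ∀ x y, ‖b x - b y‖ ≤ L * ‖x - y‖)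
    (c₀ : ℝ) (hc₀ : 0 < c₀) (β : ℝ)
    (hH : ∀ x, 2 * (inner ℝ x (b x) : ℝ) ≤ c₀ + β * ‖x‖ ^ 2)
    (p : ℝ) (hp : 0 < p) (hp1 : p < 1) (δ : ℝ) (hδ0 : 0 < δ) :
    ∃ C : ℝ, 0 ≤ C ∧ ∀ x, ‖x + δ • b x‖ ^ p
      ≤ (max (1 + δ * β + 2 * δ ^ 2 * L ^ 2) 0) ^ (p / 2) * ‖x‖ ^ p + C := by
  set a := max (1 + δ * β + 2 * δ ^ 2 * L ^ 2) 0 with ha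
  have ha0 : 0 ≤ a := le_max_right _ _
  set D : ℝ := δ * c₀ + 2 * δ ^ 2 * ‖b 0‖ ^ 2 with hD
  have hD0 : 0 ≤ D := by positivity
  refine ⟨D ^ (p / 2), by positivity, fun x => ?_⟩
  have hb : ‖b x‖ ^ 2 ≤ 2 * L ^ 2 * ‖x‖ ^ 2 + 2 * ‖b 0‖ ^ 2 := by
    have h1 : ‖b x‖ ≤ L * ‖x‖ + ‖b 0‖ := by
      have h2 := hLip x 0
      rw [sub_zero] at h2
      have h3 : ‖b x‖ ≤ ‖b x - b 0‖ + ‖b 0‖ := by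
        simpa using norm_add_le (b x - b 0) (b 0)
      linarith
    have h4 : ‖b x‖ ^ 2 ≤ (L * ‖x‖ + ‖b 0‖) ^ 2 := pow_le_pow_left₀ (norm_nonneg _) h1 2
    nlinarith [sq_nonneg (L * ‖x‖ - ‖b 0‖)]
  have hsq : ‖x + δ • b x‖ ^ 2 ≤ a * ‖x‖ ^ 2 + D := by
    rw [norm_add_sq_real, inner_smul_right, norm_smul, mul_pow, Real.norm_eq_abs, sq_abs]
    have h1 := mul_le_mul_of_nonneg_left (hH x) hδ0.le
    have h2 := mul_le_mul_of_nonneg_left hb (sq_nonneg δ)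
    have h3 := mul_le_mul_of_nonneg_right (le_max_left (1 + δ * β + 2 * δ ^ 2 * L ^ 2) 0) (sq_nonneg ‖x‖)
    rw [← ha] at h3
    rw [hD]
    linarith
  have hpow : ∀ t : ℝ, 0 ≤ t → t ^ p = (t ^ 2) ^ (p / 2) := by
    intro t ht
    rw [← Real.rpow_natCast t 2, ← Real.rpow_mul ht]
    congr 1
    push_cast
    ring
  rw [hpow _ (norm_nonneg _), hpow _ (norm_nonneg x), ← Real.mul_rpow ha0 (by positivity)]
  refine (Real.rpow_le_rpow (by positivity) hsq (by positivity)).trans ?_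
  exact Real.rpow_add_le_add_rpow (by positivity) hD0 (by positivity) (by linarith)

lemma noise_finite {n m : ℕ} (s : Matrix (Fin n) (Fin m) ℝ) (δ p : ℝ) (hp : 0 < p) (hp1 : p < 1) :
    ∫⁻ z, ENNReal.ofReal (‖Real.sqrt δ • ((WithLp.equiv 2 (Fin n → ℝ)).symm (s.mulVec z))‖ ^ p)
      ∂(stdGaussianPi m) < ⊤ := by
  have : IsProbabilityMeasure (stdGaussianPi m) := by unfold stdGaussianPi; infer_instance
  let T : (Fin m → ℝ) →L[ℝ] EuclideanSpace ℝ (Fin n) :=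
    LinearMap.toContinuousLinearMap
      (Real.sqrt δ • ((WithLp.linearEquiv 2 ℝ (Fin n → ℝ)).symm.toLinearMap ∘ₗ s.mulVecLin))
  have hT : ∀ z, Real.sqrt δ • ((WithLp.equiv 2 (Fin n → ℝ)).symm (s.mulVec z)) = T z := fun z => rfl
  simp only [hT]
  have hb : ∀ z, ‖T z‖ ^ p ≤ 1 + ‖T‖ * ∑ j, |z j| := by
    intro z
    have h1 : ‖T z‖ ≤ ‖T‖ * ∑ j, |z j| := by
      refine (T.le_opNorm z).trans (mul_le_mul_of_nonneg_left ?_ (norm_nonneg _))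
      rw [pi_norm_le_iff_of_nonneg (Finset.sum_nonneg fun _ _ => abs_nonneg _)]
      intro j
      exact Finset.single_le_sum (f := fun j => |z j|) (fun _ _ => abs_nonneg _) (Finset.mem_univ j)
    rcases le_total ‖T z‖ 1 with h | h
    · have := Real.rpow_le_one (norm_nonneg _) h hp.le
      linarith [norm_nonneg (T z)]
    · have := Real.rpow_le_rpow_of_exponent_le h hp1.le
      rw [Real.rpow_one] at this
      linarith
  have hInt : Integrable (fun z : Fin m → ℝ => 1 + ‖T‖ * ∑ j, |z j|) (stdGaussianPi m) := by
    refine (integrable_const _).add (Integrable.const_mul ?_ _)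
    refine integrable_finsetSum _ fun j _ => ?_
    unfold stdGaussianPi
    exact integrable_comp_eval (μ := fun _ : Fin m => gaussianReal 0 1) (i := j) (f := fun x => |x|)
      (IsGaussian.integrable_id (μ := gaussianReal 0 1)).abs
  refine lt_of_le_of_lt (lintegral_mono fun z => ENNReal.ofReal_le_ofReal (hb z)) ?_
  exact hInt.lintegral_lt_top

lemma lintegral_row {N : ℕ} (P : Matrix (Fin N) (Fin N) ℝ) (hP : ∀ i j, 0 ≤ P i j)
    (i : Fin N) (v : Fin N → ℝ) (hv : ∀ i, 0 ≤ v i) :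
    ∫⁻ j, ENNReal.ofReal (v j) ∂(rowMeasure P i) = ENNReal.ofReal (P.mulVec v i) := by
  rw [rowMeasure, lintegral_finsetSum_measure, Matrix.mulVec, dotProduct,
    ENNReal.ofReal_sum_of_nonneg fun j _ => mul_nonneg (hP i j) (hv j)]
  refine Finset.sum_congr rfl fun j _ => ?_
  rw [lintegral_smul_measure, lintegral_dirac, smul_eq_mul, ENNReal.ofReal_mul (hP i j)]

lemma kernel_bound {n m N : ℕ} (Q : Matrix (Fin N) (Fin N) ℝ)
    (b : EuclideanSpace ℝ (Fin n) → Fin N → EuclideanSpace ℝ (Fin n))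
    (σ : EuclideanSpace ℝ (Fin n) → Fin N → Matrix (Fin n) (Fin m) ℝ)
    (δ p : ℝ) (hp : 0 < p) (hp1 : p < 1) (hP : ∀ i j, 0 ≤ matExp (δ • Q) i j)
    (ξ : Fin N → ℝ) (hξ : ∀ i, 0 < ξ i) (q : EuclideanSpace ℝ (Fin n) × Fin N) :
    ∫⁻ r, ENNReal.ofReal (ξ r.2 * ‖r.1‖ ^ p) ∂(EMKernel Q b σ δ q)
      ≤ (ENNReal.ofReal (‖q.1 + δ • b q.1 q.2‖ ^ p) +
        ∫⁻ z, ENNReal.ofReal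
          (‖Real.sqrt δ • ((WithLp.equiv 2 (Fin n → ℝ)).symm ((σ q.1 q.2).mulVec z))‖ ^ p)
          ∂(stdGaussianPi m)) * ENNReal.ofReal ((matExp (δ • Q)).mulVec ξ q.2) := by
  have : IsProbabilityMeasure (stdGaussianPi m) := by unfold stdGaussianPi; infer_instance
  have : IsFiniteMeasure (rowMeasure (matExp (δ • Q)) q.2) := by
    constructor
    simp [rowMeasure, ENNReal.sum_lt_top]
  refine (lintegral_map_le _ _).trans ?_
  have hmeas : Measurable fun z : Fin m → ℝ => ENNReal.ofReal
      (‖Real.sqrt δ • ((WithLp.equiv 2 (Fin n → ℝ)).symm ((σ q.1 q.2).mulVec z))‖ ^ p) := by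
    apply ENNReal.measurable_ofReal.comp
    apply Measurable.pow_const
    apply Continuous.measurable
    apply Continuous.norm
    have hcont : Continuous fun z : Fin m → ℝ =>
        ((WithLp.equiv 2 (Fin n → ℝ)).symm ((σ q.1 q.2).mulVec z) : EuclideanSpace ℝ (Fin n)) :=
      (PiLp.continuous_toLp 2 _).comp (Continuous.matrix_mulVec continuous_const continuous_id)
    exact hcont.const_smul (Real.sqrt δ)
  calc _ ≤ ∫⁻ zj : (Fin m → ℝ) × Fin N, (ENNReal.ofReal (‖q.1 + δ • b q.1 q.2‖ ^ p) + ENNReal.ofReal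
          (‖Real.sqrt δ • ((WithLp.equiv 2 (Fin n → ℝ)).symm ((σ q.1 q.2).mulVec zj.1))‖ ^ p))
          * ENNReal.ofReal (ξ zj.2)
          ∂((stdGaussianPi m).prod (rowMeasure (matExp (δ • Q)) q.2)) := by
        refine lintegral_mono fun zj => ?_
        simp only
        rw [mul_comm (ξ zj.2), ENNReal.ofReal_mul (by positivity),
          ← ENNReal.ofReal_add (by positivity) (by positivity)]
        gcongr
        refine (Real.rpow_le_rpow (norm_nonneg _) (norm_add_le _ _) hp.le).trans ?_
        exact Real.rpow_add_le_add_rpow (norm_nonneg _) (norm_nonneg _) hp.le hp1.le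
    _ = _ := by
        rw [lintegral_prod_mul (f := fun z => ENNReal.ofReal (‖q.1 + δ • b q.1 q.2‖ ^ p) + ENNReal.ofReal
          (‖Real.sqrt δ • ((WithLp.equiv 2 (Fin n → ℝ)).symm ((σ q.1 q.2).mulVec z))‖ ^ p))
          (g := fun j => ENNReal.ofReal (ξ j)) (hmeas.const_add _).aemeasurable
          (measurable_of_countable _).aemeasurable,
          lintegral_row _ hP _ _ (fun i => (hξ i).le),
          lintegral_add_left measurable_const]
        simp

lemma kernel_mass {n m N : ℕ} (Q : Matrix (Fin N) (Fin N) ℝ)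
    (b : EuclideanSpace ℝ (Fin n) → Fin N → EuclideanSpace ℝ (Fin n))
    (σ : EuclideanSpace ℝ (Fin n) → Fin N → Matrix (Fin n) (Fin m) ℝ)
    (δ : ℝ) (hP : ∀ i j, 0 ≤ matExp (δ • Q) i j) (hs : ∀ i, ∑ j, matExp (δ • Q) i j = 1)
    (q : EuclideanSpace ℝ (Fin n) × Fin N) :
    ∫⁻ _, 1 ∂(EMKernel Q b σ δ q) ≤ 1 := by
  have : IsProbabilityMeasure (stdGaussianPi m) := by unfold stdGaussianPi; infer_instance
  have : IsProbabilityMeasure (rowMeasure (matExp (δ • Q)) q.2) := by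
    constructor
    simp [rowMeasure]
    rw [← ENNReal.ofReal_sum_of_nonneg fun j _ => hP _ j, hs, ENNReal.ofReal_one]
  refine (lintegral_map_le _ _).trans ?_
  simp

lemma iterate_bound {X : Type*} [MeasurableSpace X] (K : X → Measure X) (V : X → ENNReal)
    (r c : ℝ) (hr0 : 0 ≤ r) (hr1 : r < 1) (hc : 0 ≤ c)
    (hV : ∀ x, ∫⁻ y, V y ∂(K x) ≤ ENNReal.ofReal r * V x + ENNReal.ofReal c)
    (hK : ∀ x, ∫⁻ _, 1 ∂(K x) ≤ 1) (hVm : Measurable V)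
    (x : X) (B : ℝ) (hB : c / (1 - r) ≤ B) (hxB : V x ≤ ENNReal.ofReal B) (k : ℕ) :
    ∫⁻ y, V y ∂((fun ρ : Measure X => ρ.bind K)^[k] (Measure.dirac x)) ≤ ENNReal.ofReal B ∧
    ∫⁻ _, 1 ∂((fun ρ : Measure X => ρ.bind K)^[k] (Measure.dirac x)) ≤ 1 := by
  have hB0 : 0 ≤ B := (div_nonneg hc (by linarith)).trans hB
  induction k with
  | zero =>
    simp only [Function.iterate_zero, id]
    refine ⟨?_, by simp⟩
    rw [lintegral_dirac' _ hVm]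
    exact hxB
  | succ k ih =>
    rw [Function.iterate_succ_apply']
    set ρ := (fun ρ : Measure X => ρ.bind K)^[k] (Measure.dirac x)
    constructor
    · refine (Measure.lintegral_bind_le _ _ _).trans ((lintegral_mono hV).trans ?_)
      rw [lintegral_add_right _ measurable_const, lintegral_const_mul _ hVm, lintegral_const]
      have h2 := ih.2
      rw [lintegral_one] at h2
      calc _ ≤ ENNReal.ofReal r * ENNReal.ofReal B + ENNReal.ofReal c * 1 := by
            gcongr
            exact ih.1
        _ = ENNReal.ofReal (r * B + c) := by
            rw [mul_one, ← ENNReal.ofReal_mul hr0, ← ENNReal.ofReal_add (by positivity) hc]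
        _ ≤ _ := by
            apply ENNReal.ofReal_le_ofReal
            rw [div_le_iff₀ (by linarith)] at hB
            linarith
    · refine (Measure.lintegral_bind_le _ _ _).trans ((lintegral_mono hK).trans ih.2)

theorem stmt6 {n m N : ℕ} (hN : 2 ≤ N)
    (Q : Matrix (Fin N) (Fin N) ℝ)
    (hQ : IsConservativeQMatrix Q) (hirr : MatrixIrreducible Q)
    (μ : Fin N → ℝ) (hμpos : ∀ i, 0 < μ i) (hμsum : ∑ i, μ i = 1)
    (hμstat : ∀ j, ∑ i, μ i * Q i j = 0)
    (b : EuclideanSpace ℝ (Fin n) → Fin N → EuclideanSpace ℝ (Fin n))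
    (σ : EuclideanSpace ℝ (Fin n) → Fin N → Matrix (Fin n) (Fin m) ℝ)
    -- additive noise : `σ` does not depend on the space variable
    (hadd : ∀ x y i, σ x i = σ y i)
    -- global Lipschitz condition
    (L : ℝ) (hL : 0 ≤ L)
    (hLip : ∀ i x y, ‖b x i - b y i‖ + hsNorm (σ x i - σ y i) ≤ L * ‖x - y‖)
    -- condition (H)
    (c₀ : ℝ) (hc₀ : 0 < c₀) (β : Fin N → ℝ)
    (hH1 : ∀ i x, 2 * (inner ℝ x (b x i) : ℝ) + hsNorm (σ x i) ^ 2 ≤ c₀ + β i * ‖x‖ ^ 2)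
    (hH2 : ∀ i x y, 2 * (inner ℝ (x - y) (b x i - b y i) : ℝ)
        + hsNorm (σ x i - σ y i) ^ 2 ≤ β i * ‖x - y‖ ^ 2)
    -- averaging condition
    (havg : ∑ i, μ i * β i < 0)
    -- `p`, `η_p` and the Perron–Frobenius eigenvector `ξ`
    (p : ℝ) (hp : 0 < p) (hp1 : p < 1) (ηp : ℝ)
    (hη : IsGreatest (spectrumRe (Q + (p / 2) • Matrix.diagonal β)) (-ηp))
    (hηpos : 0 < ηp)
    (ξ : Fin N → ℝ) (hξpos : ∀ i, 0 < ξ i)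
    (hξeig : (Q + (p / 2) • Matrix.diagonal β).mulVec ξ = (-ηp) • ξ)
    -- the constants of Theorem 3.1
    (ξhat ξbar β₀ q₀ α : ℝ)
    (hξhat : IsGreatest (Set.range ξ) ξhat)
    (hξbar : IsLeast (Set.range ξ) ξbar⁻¹)
    (hβ₀ : IsGreatest (Set.range fun i => |β i|) β₀)
    (hq₀ : IsGreatest (Set.range fun i => -Q i i) q₀)
    (hα : α = p * (β₀ + 4 * L ^ 2 * (3 + 4 * β₀)
        + (4 : ℝ) ^ ((2 + p) / 2) * β₀ * ((4 : ℝ) ^ (p / 2) * L ^ p + q₀ * ξhat * ξbar)))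
    -- the stepsize
    (δ : ℝ) (hδ0 : 0 < δ) (hδ1 : δ < 1)
    (hδ : δ < min (1 / (16 * L ^ 2)) ((ηp / α) ^ (2 / p))) :
    ∀ (x : EuclideanSpace ℝ (Fin n)) (i : Fin N),
      (⨆ k : ℕ, ∫⁻ q, ENNReal.ofReal (‖q.1‖ ^ p)
          ∂((fun ρ : Measure (EuclideanSpace ℝ (Fin n) × Fin N) =>
              ρ.bind (EMKernel Q b σ δ))^[k] (Measure.dirac (x, i)))) < ⊤ := by
  have hNpos : 0 < N := by omega
  have hLpos : 0 < L := by
    rcases hL.eq_or_lt with h | h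
    · exfalso
      have := hδ.trans_le (min_le_left _ _)
      rw [← h] at this
      norm_num at this
      linarith
    · exact h
  have hδL : δ * (16 * L ^ 2) < 1 := by
    have := hδ.trans_le (min_le_left _ _)
    rwa [lt_div_iff₀ (by positivity)] at this
  let i₀ : Fin N := ⟨0, hNpos⟩
  have hβ0 : 0 ≤ β₀ := (abs_nonneg _).trans (hβ₀.2 ⟨i₀, rfl⟩)
  have hq0 : 0 ≤ q₀ := by
    have h1 := hQ.2 i₀
    rw [← Finset.add_sum_erase _ _ (Finset.mem_univ i₀)] at h1
    have h2 : 0 ≤ ∑ j ∈ Finset.univ.erase i₀, Q i₀ j :=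
      Finset.sum_nonneg fun j hj => hQ.1 i₀ j (Finset.ne_of_mem_erase hj).symm
    have h3 : -Q i₀ i₀ ≤ q₀ := hq₀.2 ⟨i₀, rfl⟩
    linarith
  have hmin : 0 < ξbar⁻¹ := by
    obtain ⟨k, hk⟩ := hξbar.1
    rw [← hk]; exact hξpos k
  have hbar : 0 < ξbar := inv_pos.1 hmin
  have hhat : 0 < ξhat := (hξpos i₀).trans_le (hξhat.2 ⟨i₀, rfl⟩)
  have hT0 : 0 ≤ q₀ * ξhat * ξbar := by positivity
  have hα' : p * (12 * L ^ 2 + 16 * L ^ 2 * β₀ + 4 * β₀ * (q₀ * ξhat * ξbar)) ≤ α := by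
    rw [hα]
    apply mul_le_mul_of_nonneg_left _ hp.le
    have h4 : (4 : ℝ) ≤ (4 : ℝ) ^ ((2 + p) / 2) := by
      conv_lhs => rw [← Real.rpow_one 4]
      exact Real.rpow_le_rpow_of_exponent_le (by norm_num) (by linarith)
    have h5 : 0 ≤ (4 : ℝ) ^ (p / 2) * L ^ p := by positivity
    have h6 : 4 * β₀ * (q₀ * ξhat * ξbar) ≤ (4 : ℝ) ^ ((2 + p) / 2) * β₀ *
        ((4 : ℝ) ^ (p / 2) * L ^ p + q₀ * ξhat * ξbar) := by
      apply mul_le_mul (mul_le_mul_of_nonneg_right h4 hβ0) (by linarith) hT0 (by positivity)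
    linarith
  have hαpos : 0 < α := by
    refine lt_of_lt_of_le ?_ hα'
    have : 0 < 12 * L ^ 2 := by positivity
    have : 0 ≤ 16 * L ^ 2 * β₀ + 4 * β₀ * (q₀ * ξhat * ξbar) := by positivity
    apply mul_pos hp
    linarith
  have hδα : δ * α < ηp := by
    have h1 : δ < (ηp / α) ^ (2 / p) := hδ.trans_le (min_le_right _ _)
    have h0 : 0 < ηp / α := by positivity
    have h2 : δ ^ (p / 2) < ηp / α := by
      have := Real.rpow_lt_rpow hδ0.le h1 (by positivity : 0 < p / 2)
      rwa [← Real.rpow_mul h0.le, show 2 / p * (p / 2) = 1 by field_simp, Real.rpow_one] at this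
    have h3 : δ ≤ δ ^ (p / 2) := by
      conv_lhs => rw [← Real.rpow_one δ]
      exact Real.rpow_le_rpow_of_exponent_ge hδ0 hδ1.le (by linarith)
    rw [← lt_div_iff₀ hαpos]
    linarith
  set P := matExp (δ • Q) with hPdef
  have hP0 : ∀ i j, 0 ≤ P i j := by
    apply matExp_nonneg
    intro i j hij
    exact mul_nonneg hδ0.le (hQ.1 i j hij)
  have hPs : ∀ i, ∑ j, P i j = 1 := by
    apply matExp_row_sum
    intro i
    simp only [Matrix.smul_apply, smul_eq_mul, ← Finset.mul_sum, hQ.2 i, mul_zero]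
  have hPξ : ∀ i, 0 ≤ P.mulVec ξ i := fun i => by
    rw [Matrix.mulVec, dotProduct]
    exact Finset.sum_nonneg fun j _ => mul_nonneg (hP0 i j) (hξpos j).le
  -- contraction factor
  set r : ℝ := max (1 - δ * (ηp - δ * α)) 0 with hr
  have hr0 : 0 ≤ r := le_max_right _ _
  have hr1 : r < 1 := by
    apply max_lt _ one_pos
    have : 0 < δ * (ηp - δ * α) := mul_pos hδ0 (by linarith)
    linarith
  have hcontr : ∀ i, (max (1 + δ * β i + 2 * δ ^ 2 * L ^ 2) 0) ^ (p / 2) * P.mulVec ξ i ≤ r * ξ i := by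
    intro i
    rcases le_total 0 (1 + δ * β i + 2 * δ ^ 2 * L ^ 2) with h | h
    · rw [max_eq_left h]
      have h1 := key_contraction Q hQ L hLpos β p hp hp1 ηp hηpos ξ hξpos hξeig ξhat ξbar β₀ q₀ α
        hξhat hξbar hβ₀ hq₀ hα' δ hδ0 hδ1 hδL hδα i h
      have h2 : (1 + δ * β i + 2 * δ ^ 2 * L ^ 2) ^ (p / 2)
          ≤ 1 + p / 2 * (δ * β i + 2 * δ ^ 2 * L ^ 2) := by
        rw [add_assoc]
        exact rpow_one_add_le_one_add_mul_self (by linarith) (by linarith) (by linarith)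
      refine (mul_le_mul_of_nonneg_right h2 (hPξ i)).trans (h1.trans ?_)
      exact mul_le_mul_of_nonneg_right (le_max_left _ _) (hξpos i).le
    · rw [max_eq_right h, Real.zero_rpow (by positivity), zero_mul]
      exact mul_nonneg hr0 (hξpos i).le
  have hhs : ∀ M : Matrix (Fin n) (Fin m) ℝ, 0 ≤ hsNorm M := fun M => Real.sqrt_nonneg _
  have hdrift := fun i => drift_bound (fun x => b x i) L hLpos
    (fun x y => by have := hLip i x y; have := hhs (σ x i - σ y i); linarith) c₀ hc₀ (β i)
    (fun x => by have := hH1 i x; have := sq_nonneg (hsNorm (σ x i)); linarith) p hp hp1 δ hδ0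
  choose C hC0 hC using hdrift
  set M : Fin N → ENNReal := fun i => ∫⁻ z, ENNReal.ofReal
    (‖Real.sqrt δ • ((WithLp.equiv 2 (Fin n → ℝ)).symm ((σ 0 i).mulVec z))‖ ^ p) ∂(stdGaussianPi m) with hM
  have hMfin : ∀ i, M i ≠ ⊤ := fun i => (noise_finite (σ 0 i) δ p hp hp1).ne
  set c : ℝ := ∑ i, (C i + (M i).toReal) * P.mulVec ξ i with hc
  have hcn : ∀ i, 0 ≤ (C i + (M i).toReal) * P.mulVec ξ i := fun i =>
    mul_nonneg (add_nonneg (hC0 i) ENNReal.toReal_nonneg) (hPξ i)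
  have hc0 : 0 ≤ c := Finset.sum_nonneg fun i _ => hcn i
  set V : EuclideanSpace ℝ (Fin n) × Fin N → ENNReal :=
    fun q => ENNReal.ofReal (ξ q.2 * ‖q.1‖ ^ p) with hVdef
  have hV : ∀ q, ∫⁻ y, V y ∂(EMKernel Q b σ δ q) ≤ ENNReal.ofReal r * V q + ENNReal.ofReal c := by
    rintro ⟨x, i⟩
    refine (kernel_bound Q b σ δ p hp hp1 hP0 ξ hξpos (x, i)).trans ?_
    simp only [hadd x 0 i]
    change (_ + M i) * ENNReal.ofReal (P.mulVec ξ i) ≤ _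
    have hx : 0 ≤ ‖x + δ • b x i‖ ^ p := by positivity
    rw [← ENNReal.ofReal_toReal (hMfin i), ← ENNReal.ofReal_add hx ENNReal.toReal_nonneg,
      ← ENNReal.ofReal_mul (by positivity), hVdef, ← ENNReal.ofReal_mul hr0,
      ← ENNReal.ofReal_add (mul_nonneg hr0 (mul_nonneg (hξpos i).le (by positivity))) hc0]
    apply ENNReal.ofReal_le_ofReal
    have h1 := mul_le_mul_of_nonneg_right (hC i x) (hPξ i)
    have h2 := mul_le_mul_of_nonneg_right (hcontr i) (by positivity : 0 ≤ ‖x‖ ^ p)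
    have h3 : (C i + (M i).toReal) * P.mulVec ξ i ≤ c :=
      Finset.single_le_sum (f := fun i => (C i + (M i).toReal) * P.mulVec ξ i)
        (fun i _ => hcn i) (Finset.mem_univ i)
    simp only
    linarith
  have hVm : Measurable V := by
    apply ENNReal.measurable_ofReal.comp
    apply Measurable.mul
    · exact (measurable_of_countable ξ).comp measurable_snd
    · exact measurable_fst.norm.pow_const p
  intro x i
  set B : ℝ := max (c / (1 - r)) (ξ i * ‖x‖ ^ p) with hB
  have hmainb := fun k => (iterate_bound (EMKernel Q b σ δ) V r c hr0 hr1 hc0 hV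
    (kernel_mass Q b σ δ hP0 hPs) hVm (x, i) B (le_max_left _ _)
    (ENNReal.ofReal_le_ofReal (le_max_right _ _)) k).1
  refine lt_of_le_of_lt (iSup_le (a := ENNReal.ofReal ξbar * ENNReal.ofReal B) fun k => ?_)
    (ENNReal.mul_lt_top ENNReal.ofReal_lt_top ENNReal.ofReal_lt_top)
  refine le_trans ?_ (mul_le_mul_right (hmainb k) _)
  rw [← lintegral_const_mul _ hVm]
  refine lintegral_mono fun q => ?_
  rw [hVdef, ← ENNReal.ofReal_mul hbar.le]
  apply ENNReal.ofReal_le_ofReal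
  have h1 : 1 ≤ ξbar * ξ q.2 := by
    have := mul_le_mul_of_nonneg_left (hξbar.2 ⟨q.2, rfl⟩ : ξbar⁻¹ ≤ ξ q.2) hbar.le
    rwa [mul_inv_cancel₀ hbar.ne'] at this
  have h2 := mul_le_mul_of_nonneg_right h1 (by positivity : 0 ≤ ‖q.1‖ ^ p)
  linarith
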